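/- arXiv:2209.02796 — 6 statements merged into one kernel-verified Lean document; each statement's English description precedes it below -/
import Mathlib

section
/- Let n ≥ 1 and p ∈ (1,∞). There exist constants 0 < c ≤ C, depending only on p, such that for every κ ≥ 0 and all n×n real matrices A and B one has c·|V(A) − V(B)|² ≤ (S(A) − S(B)) : (A − B) ≤ C·|V(A) − V(B)|². -/
/-!
Write `a = |A|`, `b = |B|`, `t = A : B`, `α = (κ + a) ^ ((p - 2) / 2)`, `β = (κ + b) ^ ((p - 2) / 2)`.
Then `(S(A) - S(B)) : (A - B) = α²a² + β²b² - (α² + β²)t` and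
`|V(A) - V(B)|² = α²a² + β²b² - 2αβt`. Both are affine in `t`, and `|t| ≤ ab` by Cauchy-Schwarz, so
it is enough to compare them at `t = ab` and `t = -ab` (`affine_nonneg`), that is, to compare
`(α²a ∓ β²b)(a ∓ b)` with `(αa ∓ βb)²`; by symmetry `b ≤ a`.

At `t = ab` the key fact is that `h(s) = (κ + s) ^ r * s` satisfies
`h(a) - h(b) ≈ (κ + a) ^ r * (a - b)` for every `r > -1`, with constants `min 1 (1 + r)` and
`max 1 (1 + r)`; this is Bernoulli's inequality (`shift_diff_bounds`). Used for `r = p - 2` and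
`r = (p - 2) / 2`, it makes both sides comparable to `(κ + a) ^ (p - 2) * (a - b)²`.
At `t = -ab` monotonicity of `h` makes both sides comparable to `(κ + a) ^ (p - 2) * a²`.
-/

open Real MeasureTheory

/-- Frobenius norm of an n × n real matrix. -/
noncomputable def frobNorm {n : ℕ} (A : Matrix (Fin n) (Fin n) ℝ) : ℝ :=
  Real.sqrt (∑ i, ∑ j, (A i j) ^ 2)

/-- Frobenius inner product A : B of two n × n real matrices. -/
noncomputable def frobInner {n : ℕ} (A B : Matrix (Fin n) (Fin n) ℝ) : ℝ :=
  ∑ i, ∑ j, A i j * B i j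

/-- S(ξ) = (κ + |ξ|)^(p-2) ξ. -/
noncomputable def Smap {n : ℕ} (p κ : ℝ) (A : Matrix (Fin n) (Fin n) ℝ) :
    Matrix (Fin n) (Fin n) ℝ :=
  ((κ + frobNorm A) ^ (p - 2)) • A

/-- V(ξ) = (κ + |ξ|)^((p-2)/2) ξ. -/
noncomputable def Vmap {n : ℕ} (p κ : ℝ) (A : Matrix (Fin n) (Fin n) ℝ) :
    Matrix (Fin n) (Fin n) ℝ :=
  ((κ + frobNorm A) ^ ((p - 2) / 2)) • A

/-- The shifted potential φ_κ(t) = ∫₀^t (κ+s)^(p-2) s ds. -/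
noncomputable def phiShift (p κ t : ℝ) : ℝ :=
  ∫ s in (0:ℝ)..t, (κ + s) ^ (p - 2) * s

/-- For `r > -1`, the increment of `s ↦ (κ + s) ^ r * s` over `[b, a]` is comparable to
`(κ + a) ^ r * (a - b)`, uniformly in `κ`. With `x = (κ + b) / (κ + a)`, this reduces to Bernoulli's
inequality for `x ^ (1 + r)`. -/
theorem shift_diff_bounds {r κ a b : ℝ} (hr : -1 < r) (hκ : 0 ≤ κ) (hb : 0 ≤ b) (hab : b ≤ a) :
    min 1 (1 + r) * ((κ + a) ^ r * (a - b)) ≤ (κ + a) ^ r * a - (κ + b) ^ r * b ∧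
      (κ + a) ^ r * a - (κ + b) ^ r * b ≤ max 1 (1 + r) * ((κ + a) ^ r * (a - b)) := by
  have hN : 0 ≤ (κ + a) ^ r * (a - b) :=
    mul_nonneg (Real.rpow_nonneg (by linarith) _) (by linarith)
  rcases hb.eq_or_lt with rfl | hb
  · simp only [sub_zero, mul_zero] at hN ⊢
    constructor
    · nlinarith [min_le_left 1 (1 + r)]
    · nlinarith [le_max_left 1 (1 + r)]
  have hu : 0 < κ + a := by linarith
  have hv : 0 < κ + b := by linarith
  obtain ⟨x, hx⟩ : ∃ x, x = (κ + b) / (κ + a) := ⟨_, rfl⟩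
  have hx0 : 0 < x := hx ▸ div_pos hv hu
  have hx1 : x ≤ 1 := by rw [hx, div_le_one hu]; linarith
  have hxu : κ + b = x * (κ + a) := by rw [hx]; field_simp
  have hvr : (κ + b) ^ r = x ^ r * (κ + a) ^ r := by
    rw [hxu, Real.mul_rpow hx0.le hu.le]
  have hxr : x ^ (1 + r) = x * x ^ r := by rw [Real.rpow_add hx0, Real.rpow_one]
  have hw : 0 < (κ + a) ^ r := Real.rpow_pos_of_pos hu _
  have hd : a - b = (1 - x) * (κ + a) := by linarith
  have hbx : b ≤ x * (κ + a) := by linarith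
  rw [hvr]
  -- after dividing by `(κ + a) ^ r`, both bounds concern the correction term `(1 - x ^ r) * b`
  have key : min 1 (1 + r) * (a - b) ≤ (a - b) + (1 - x ^ r) * b ∧
      (a - b) + (1 - x ^ r) * b ≤ max 1 (1 + r) * (a - b) := by
    rcases le_total 0 r with h | h
    · have hB : 1 + (1 + r) * (x - 1) ≤ x ^ (1 + r) := by
        have := one_add_mul_self_le_rpow_one_add (s := x - 1) (by linarith)
          (p := 1 + r) (by linarith)
        simpa using this
      have h1 : x ^ r ≤ 1 := Real.rpow_le_one hx0.le hx1 h
      rw [min_eq_left (by linarith), max_eq_right (by linarith)]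
      constructor
      · nlinarith
      · have e1 : (1 - x ^ r) * b ≤ (1 - x ^ r) * (x * (κ + a)) :=
          mul_le_mul_of_nonneg_left hbx (by linarith)
        rw [hxr] at hB
        have e2 : (x - x * x ^ r) * (κ + a) ≤ (r * (1 - x)) * (κ + a) :=
          mul_le_mul_of_nonneg_right (by linarith) hu.le
        rw [hd]; linarith
    · have hB : x ^ (1 + r) ≤ 1 + (1 + r) * (x - 1) := by
        have := rpow_one_add_le_one_add_mul_self (s := x - 1) (by linarith)
          (p := 1 + r) (by linarith) (by linarith)
        simpa using this
      have h1 : 1 ≤ x ^ r := Real.one_le_rpow_of_pos_of_le_one_of_nonpos hx0 hx1 h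
      rw [min_eq_right (by linarith), max_eq_left (by linarith)]
      constructor
      · have e1 : (x ^ r - 1) * b ≤ (x ^ r - 1) * (x * (κ + a)) :=
          mul_le_mul_of_nonneg_left hbx (by linarith)
        rw [hxr] at hB
        have e2 : (x * x ^ r - x) * (κ + a) ≤ (-r * (1 - x)) * (κ + a) :=
          mul_le_mul_of_nonneg_right (by linarith) hu.le
        rw [hd]; linarith
      · nlinarith
  constructor
  · have := mul_le_mul_of_nonneg_left key.1 hw.le
    linarith
  · have := mul_le_mul_of_nonneg_left key.2 hw.le
    linarith

theorem rpow_eq_sq {p u : ℝ} (hu : 0 ≤ u) : u ^ (p - 2) = (u ^ ((p - 2) / 2)) ^ 2 := by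
  rw [← Real.rpow_mul_natCast hu]; congr 1; push_cast; ring

/-- An affine function that is nonnegative at `±m` is nonnegative on `[-m, m]`. -/
theorem affine_nonneg {d e m t : ℝ} (h1 : 0 ≤ d - e * m) (h2 : 0 ≤ d + e * m)
    (ht : |t| ≤ m) : 0 ≤ d - e * t := by
  obtain ⟨h3, h4⟩ := abs_le.1 ht
  rcases le_total 0 e with he | he
  · nlinarith
  · nlinarith

/-- The lower constant, the minimum of the constants needed at `t = -ab` and `t = ab`. -/
noncomputable def cLow (p : ℝ) : ℝ :=
  min (1 / 4) (min 1 (1 + (p - 2)) / (max 1 (1 + (p - 2) / 2)) ^ 2)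

/-- The upper constant, the maximum of the constants needed at `t = -ab` and `t = ab`. -/
noncomputable def cUp (p : ℝ) : ℝ :=
  max 4 (max 1 (1 + (p - 2)) / (min 1 (1 + (p - 2) / 2)) ^ 2)

theorem cLow_pos {p : ℝ} (hp : 1 < p) : 0 < cLow p := by
  have h1 : 0 < min 1 (1 + (p - 2)) := lt_min one_pos (by linarith)
  have h2 : 0 < max 1 (1 + (p - 2) / 2) := lt_max_of_lt_left one_pos
  exact lt_min (by norm_num) (by positivity)

/-- The inequality in terms of `a = |A|`, `b = |B|` and `t = A : B`, when `b ≤ a`. -/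
theorem scalar_bounds_of_le {p κ a b t : ℝ} (hp : 1 < p) (hκ : 0 ≤ κ) (hb : 0 ≤ b) (hab : b ≤ a)
    (ht : |t| ≤ a * b) {α β : ℝ} (hα : α = (κ + a) ^ ((p - 2) / 2))
    (hβ : β = (κ + b) ^ ((p - 2) / 2)) :
    cLow p * (α ^ 2 * a ^ 2 + β ^ 2 * b ^ 2 - 2 * α * β * t) ≤
        α ^ 2 * a ^ 2 + β ^ 2 * b ^ 2 - (α ^ 2 + β ^ 2) * t ∧
      α ^ 2 * a ^ 2 + β ^ 2 * b ^ 2 - (α ^ 2 + β ^ 2) * t ≤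
        cUp p * (α ^ 2 * a ^ 2 + β ^ 2 * b ^ 2 - 2 * α * β * t) := by
  have hS := shift_diff_bounds (r := p - 2) (by linarith) hκ hb hab
  have hV := shift_diff_bounds (r := (p - 2) / 2) (by linarith) hκ hb hab
  rw [rpow_eq_sq (by linarith : 0 ≤ κ + a), rpow_eq_sq (by linarith : 0 ≤ κ + b)] at hS
  rw [← hα, ← hβ] at hS hV
  have ha : 0 ≤ a := hb.trans hab
  have hα0 : 0 ≤ α := hα ▸ Real.rpow_nonneg (by linarith) _
  have hβ0 : 0 ≤ β := hβ ▸ Real.rpow_nonneg (by linarith) _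
  have hm : 0 < min 1 (1 + (p - 2)) := lt_min one_pos (by linarith)
  have hm' : 0 < min 1 (1 + (p - 2) / 2) := lt_min one_pos (by linarith)
  have hM' : 0 < max 1 (1 + (p - 2) / 2) := lt_max_of_lt_left one_pos
  have hc := (cLow_pos hp).le
  have hc4 : cLow p ≤ 1 / 4 := min_le_left _ _
  have hC4 : 4 ≤ cUp p := le_max_left _ _
  have hcM : cLow p * (max 1 (1 + (p - 2) / 2)) ^ 2 ≤ min 1 (1 + (p - 2)) :=
    (le_div_iff₀ (by positivity)).1 (min_le_right _ _)
  have hCm : max 1 (1 + (p - 2)) ≤ cUp p * (min 1 (1 + (p - 2) / 2)) ^ 2 :=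
    (div_le_iff₀ (by positivity)).1 (le_max_right _ _)
  generalize min 1 (1 + (p - 2)) = m at *
  generalize max 1 (1 + (p - 2)) = M at *
  generalize min 1 (1 + (p - 2) / 2) = m' at *
  generalize max 1 (1 + (p - 2) / 2) = M' at *
  generalize cLow p = c at *
  generalize cUp p = C at *
  have hd : 0 ≤ a - b := by linarith
  have hq : 0 ≤ α ^ 2 * (a - b) ^ 2 := by positivity
  have hq' : 0 ≤ α * (a - b) := by positivity
  -- `t = ab`: both sides are comparable to `α ^ 2 * (a - b) ^ 2`
  have S1 : m * (α ^ 2 * (a - b) ^ 2) ≤ (α ^ 2 * a - β ^ 2 * b) * (a - b) := by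
    have := mul_le_mul_of_nonneg_right hS.1 hd
    linarith
  have S2 : (α ^ 2 * a - β ^ 2 * b) * (a - b) ≤ M * (α ^ 2 * (a - b) ^ 2) := by
    have := mul_le_mul_of_nonneg_right hS.2 hd
    linarith
  have hV0 : 0 ≤ α * a - β * b := le_trans (by positivity) hV.1
  have V1 : m' ^ 2 * (α ^ 2 * (a - b) ^ 2) ≤ (α * a - β * b) ^ 2 := by
    have := pow_le_pow_left₀ (by positivity) hV.1 2
    linarith
  have V2 : (α * a - β * b) ^ 2 ≤ M' ^ 2 * (α ^ 2 * (a - b) ^ 2) := by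
    have := pow_le_pow_left₀ hV0 hV.2 2
    linarith
  have P1 : c * (α * a - β * b) ^ 2 ≤ (α ^ 2 * a - β ^ 2 * b) * (a - b) := by
    have e1 := mul_le_mul_of_nonneg_left V2 hc
    have e2 := mul_le_mul_of_nonneg_right hcM hq
    linarith
  have P2 : (α ^ 2 * a - β ^ 2 * b) * (a - b) ≤ C * (α * a - β * b) ^ 2 := by
    have e1 := mul_le_mul_of_nonneg_left V1 (by linarith : 0 ≤ C)
    have e2 := mul_le_mul_of_nonneg_right hCm hq
    linarith
  -- `t = -ab`: both sides lie between `α ^ 2 * a ^ 2` and `4 * (α ^ 2 * a ^ 2)`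
  have hS0 : β ^ 2 * b ≤ α ^ 2 * a := by
    have : 0 ≤ m * (α ^ 2 * (a - b)) := by positivity
    linarith [hS.1]
  have T1 : α ^ 2 * a ^ 2 ≤ (α ^ 2 * a + β ^ 2 * b) * (a + b) := by
    have : 0 ≤ α ^ 2 * a * b + β ^ 2 * b * (a + b) := by positivity
    linarith
  have T2 : (α ^ 2 * a + β ^ 2 * b) * (a + b) ≤ 4 * (α ^ 2 * a ^ 2) := by
    have : (α ^ 2 * a + β ^ 2 * b) * (a + b) ≤ (2 * (α ^ 2 * a)) * (2 * a) :=
      mul_le_mul (by linarith) (by linarith) (by positivity) (by positivity)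
    linarith
  have W1 : α ^ 2 * a ^ 2 ≤ (α * a + β * b) ^ 2 := by
    have : (α * a) ^ 2 ≤ (α * a + β * b) ^ 2 :=
      pow_le_pow_left₀ (by positivity) (by linarith [mul_nonneg hβ0 hb]) 2
    linarith
  have W2 : (α * a + β * b) ^ 2 ≤ 4 * (α ^ 2 * a ^ 2) := by
    have : (α * a + β * b) ^ 2 ≤ (2 * (α * a)) ^ 2 :=
      pow_le_pow_left₀ (by positivity) (by linarith) 2
    linarith
  have Q1 : c * (α * a + β * b) ^ 2 ≤ (α ^ 2 * a + β ^ 2 * b) * (a + b) := by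
    have := mul_le_mul_of_nonneg_right hc4 (sq_nonneg (α * a + β * b))
    linarith
  have Q2 : (α ^ 2 * a + β ^ 2 * b) * (a + b) ≤ C * (α * a + β * b) ^ 2 := by
    have := mul_le_mul_of_nonneg_right hC4 (sq_nonneg (α * a + β * b))
    linarith
  constructor
  · have := affine_nonneg (d := (1 - c) * (α ^ 2 * a ^ 2 + β ^ 2 * b ^ 2))
      (e := α ^ 2 + β ^ 2 - c * (2 * α * β)) (by linarith) (by linarith) ht
    linarith
  · have := affine_nonneg (d := (C - 1) * (α ^ 2 * a ^ 2 + β ^ 2 * b ^ 2))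
      (e := C * (2 * α * β) - (α ^ 2 + β ^ 2)) (by linarith) (by linarith) ht
    linarith

theorem frobNorm_nonneg {n : ℕ} (A : Matrix (Fin n) (Fin n) ℝ) : 0 ≤ frobNorm A :=
  Real.sqrt_nonneg _

theorem frobNorm_sq {n : ℕ} (A : Matrix (Fin n) (Fin n) ℝ) : frobNorm A ^ 2 = frobInner A A := by
  rw [frobNorm, Real.sq_sqrt (by positivity)]
  simp only [frobInner, sq]

/-- Cauchy-Schwarz for the Frobenius inner product. -/
theorem abs_frobInner_le {n : ℕ} (A B : Matrix (Fin n) (Fin n) ℝ) :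
    |frobInner A B| ≤ frobNorm A * frobNorm B := by
  refine abs_le_of_sq_le_sq ?_ (mul_nonneg (frobNorm_nonneg A) (frobNorm_nonneg B))
  have h := Finset.sum_mul_sq_le_sq_mul_sq (Finset.univ : Finset (Fin n × Fin n))
    (fun x => A x.1 x.2) (fun x => B x.1 x.2)
  simp only [Fintype.sum_prod_type] at h
  rw [mul_pow, frobNorm_sq, frobNorm_sq]
  simpa only [frobInner, sq] using h

theorem frobInner_smul_sub {n : ℕ} (x y z w : ℝ) (A B : Matrix (Fin n) (Fin n) ℝ) :
    frobInner (x • A - y • B) (z • A - w • B) =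
      x * z * frobNorm A ^ 2 + y * w * frobNorm B ^ 2 - (x * w + y * z) * frobInner A B := by
  simp only [frobNorm_sq, frobInner, Finset.mul_sum, ← Finset.sum_add_distrib,
    ← Finset.sum_sub_distrib, Matrix.sub_apply, Matrix.smul_apply, smul_eq_mul]
  refine Finset.sum_congr rfl fun i _ => Finset.sum_congr rfl fun j _ => ?_
  ring

theorem stmt_0 (p : ℝ) (hp : 1 < p) :
    ∃ c C : ℝ, 0 < c ∧ c ≤ C ∧
      ∀ (n : ℕ), 1 ≤ n → ∀ κ : ℝ, 0 ≤ κ →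
        ∀ A B : Matrix (Fin n) (Fin n) ℝ,
          c * frobNorm (Vmap p κ A - Vmap p κ B) ^ 2 ≤
              frobInner (Smap p κ A - Smap p κ B) (A - B) ∧
          frobInner (Smap p κ A - Smap p κ B) (A - B) ≤
              C * frobNorm (Vmap p κ A - Vmap p κ B) ^ 2 := by
  refine ⟨cLow p, cUp p, cLow_pos hp, ?_, ?_⟩
  · calc cLow p ≤ 1 / 4 := min_le_left _ _
      _ ≤ 4 := by norm_num
      _ ≤ cUp p := le_max_left _ _
  intro n _ κ hκ A B
  have ha := frobNorm_nonneg A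
  have hb := frobNorm_nonneg B
  have hAB := abs_frobInner_le A B
  have hS := frobInner_smul_sub
    ((κ + frobNorm A) ^ (p - 2)) ((κ + frobNorm B) ^ (p - 2)) 1 1 A B
  have hV := frobInner_smul_sub
    ((κ + frobNorm A) ^ ((p - 2) / 2)) ((κ + frobNorm B) ^ ((p - 2) / 2))
    ((κ + frobNorm A) ^ ((p - 2) / 2)) ((κ + frobNorm B) ^ ((p - 2) / 2)) A B
  rw [one_smul, one_smul] at hS
  rw [frobNorm_sq, Smap, Smap, Vmap, Vmap]
  rw [hS, hV, rpow_eq_sq (by linarith : 0 ≤ κ + frobNorm A), rpow_eq_sq (by linarith : 0 ≤ κ + frobNorm B)]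
  rcases le_total (frobNorm B) (frobNorm A) with h | h
  · obtain ⟨h1, h2⟩ := scalar_bounds_of_le hp hκ hb h hAB rfl rfl
    constructor <;> linarith
  · obtain ⟨h1, h2⟩ := scalar_bounds_of_le hp hκ ha h (mul_comm (frobNorm A) _ ▸ hAB) rfl rfl
    constructor <;> linarith
end

section
/- Let n ≥ 1 and p ∈ (1,∞). There exist constants 0 < c ≤ C, depending only on p, such that for every κ ≥ 0 and all n×n real matrices A and B one has c·(κ + |A| + |A − B|)^{p−2}·|A − B| ≤ |S(A) − S(B)| ≤ C·(κ + |A| + |A − B|)^{p−2}·|A − B|. -/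
/-!
The estimate follows from the triangle inequality and Bernoulli's inequality, and holds in any real
normed space. The weight `κ + ‖A‖ + ‖A - B‖` is comparable, with factor `3`, to
`κ + max ‖A‖ ‖B‖`; once it is replaced by the latter, `A` and `B` play symmetric roles and one may
take `‖B‖ ≤ ‖A‖`. Put `q = p - 2`, `u = κ + ‖A‖`, `v = κ + ‖B‖`, `t = v / u ≤ 1` and `r = t ^ q`.
After division by `u ^ q` it remains to compare `A - r B` with `A - B`. These differ by
`(1 - r) B`, whose norm is at most a constant times `u (1 - t) = ‖A‖ - ‖B‖`, because
`|t - t ^ (q + 1)|` is bounded by a multiple of `1 - t` (`abs_one_sub_mul_le`). In turn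
`‖A‖ - ‖B‖` is bounded by `‖A - B‖`, and also by a constant times
`‖A‖ - r ‖B‖ ≤ ‖A - r B‖` (`le_sub_mul`), which gives both inequalities (`norm_sub_comparable`).
The hypothesis `p > 1` enters as `q + 1 > 0`.
-/

open Real MeasureTheory

/-- Bernoulli's inequality on `(0, 1]`, for all positive exponents at once. -/
lemma bernoulli_two_sided {s t : ℝ} (hs : 0 < s) (ht0 : 0 < t) (ht1 : t ≤ 1) :
    min 1 s * (1 - t) ≤ 1 - t ^ s ∧ 1 - t ^ s ≤ max 1 s * (1 - t) := by
  rcases le_total 1 s with h | h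
  · have h1 := one_add_mul_self_le_rpow_one_add (s := t - 1) (by linarith) h
    have h2 := Real.rpow_le_rpow_of_exponent_ge ht0 ht1 h
    rw [Real.rpow_one] at h2
    rw [add_sub_cancel] at h1
    rw [min_eq_left h, max_eq_right h]
    constructor <;> linarith
  · have h1 := rpow_one_add_le_one_add_mul_self (s := t - 1) (by linarith) hs.le h
    have h2 := Real.rpow_le_rpow_of_exponent_ge ht0 ht1 h
    rw [Real.rpow_one] at h2
    rw [add_sub_cancel] at h1
    rw [min_eq_right h, max_eq_left h]
    constructor <;> linarith

lemma mul_rpow_eq {q t : ℝ} (ht0 : 0 < t) : t * t ^ q = t ^ (q + 1) := by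
  rw [Real.rpow_add_one ht0.ne', mul_comm]

lemma abs_one_sub_mul_le {q t u b : ℝ} (hq : -1 < q) (ht0 : 0 < t) (ht1 : t ≤ 1)
    (hu : 0 < u) (hbt : b ≤ t * u) :
    |1 - t ^ q| * b ≤ max 1 (q + 1) * (u * (1 - t)) := by
  have h1 := (bernoulli_two_sided (s := q + 1) (by linarith) ht0 ht1).2
  have h0 : t ^ (q + 1) ≤ 1 := Real.rpow_le_one ht0.le ht1 (by linarith)
  have hM : (1 - t) ≤ max 1 (q + 1) * (1 - t) :=
    le_mul_of_one_le_left (by linarith) (le_max_left _ _)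
  have key : |1 - t ^ q| * t ≤ max 1 (q + 1) * (1 - t) := by
    rw [← abs_of_pos ht0, ← abs_mul, abs_of_pos ht0, sub_mul, one_mul, mul_comm (t ^ q),
      mul_rpow_eq ht0, abs_le]
    constructor <;> linarith
  calc |1 - t ^ q| * b ≤ |1 - t ^ q| * (t * u) := by gcongr
    _ = (|1 - t ^ q| * t) * u := by ring
    _ ≤ (max 1 (q + 1) * (1 - t)) * u := by gcongr
    _ = _ := by ring

/-- Here `u - κ` and `t * u - κ` are the larger and the smaller norm. The shift `κ` enters as
`κ * (t ^ q - 1)`, so the sign of `q` decides whether it helps; for `q ≥ 0` it is avoided through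
`t ^ q ≤ 1`. -/
lemma le_sub_mul {q t u κ : ℝ} (hq : -1 < q) (ht0 : 0 < t) (ht1 : t ≤ 1)
    (hu : 0 < u) (hκ : 0 ≤ κ) (hb : 0 ≤ t * u - κ) :
    min 1 (q + 1) * (u * (1 - t)) ≤ (u - κ) - t ^ q * (t * u - κ) := by
  rcases le_total 0 q with h | h
  · have hr : t ^ q ≤ 1 := Real.rpow_le_one ht0.le ht1 h
    rw [min_eq_left (by linarith)]
    nlinarith [mul_nonneg (sub_nonneg.2 hr) hb]
  · have hr : 1 ≤ t ^ q := Real.one_le_rpow_of_pos_of_le_one_of_nonpos ht0 ht1 h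
    have h1 := (bernoulli_two_sided (s := q + 1) (by linarith) ht0 ht1).1
    have h2 := mul_rpow_eq (q := q) ht0
    have h3 := mul_le_mul_of_nonneg_left h1 hu.le
    have h4 := mul_nonneg (sub_nonneg.2 hr) hκ
    rw [← h2] at h3
    linarith

/-- A value of the constant that serves on both sides, before `κ + ‖A‖ + ‖A - B‖` is brought
in. -/
noncomputable def coreConst (q : ℝ) : ℝ := 1 + max 1 (q + 1) / min 1 (q + 1)

lemma one_le_coreConst {q : ℝ} (hq : -1 < q) : 1 ≤ coreConst q := by
  have : 0 < min 1 (q + 1) := lt_min one_pos (by linarith)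
  have : 0 < max 1 (q + 1) := lt_max_of_lt_left one_pos
  unfold coreConst
  have : 0 ≤ max 1 (q + 1) / min 1 (q + 1) := by positivity
  linarith

section NormedSpace

variable {E : Type*} [NormedAddCommGroup E] [NormedSpace ℝ E]

/-- The comparison after division by `u ^ q`, with `t` the ratio `(κ + ‖B‖) / (κ + ‖A‖)`. -/
lemma norm_sub_comparable {q κ t u : ℝ} (hq : -1 < q) (hκ : 0 ≤ κ) (A B : E)
    (hu : 0 < u) (ht0 : 0 < t) (ht1 : t ≤ 1) (hA : κ + ‖A‖ = u) (hB : κ + ‖B‖ = t * u) :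
    ‖A - B‖ ≤ coreConst q * ‖A - t ^ q • B‖ ∧
      ‖A - t ^ q • B‖ ≤ coreConst q * ‖A - B‖ := by
  have hm : 0 < min 1 (q + 1) := lt_min one_pos (by linarith)
  have hM : 0 < max 1 (q + 1) := lt_max_of_lt_left one_pos
  have hr : 0 < t ^ q := Real.rpow_pos_of_pos ht0 q
  have hdiff : ‖(1 - t ^ q) • B‖ ≤ max 1 (q + 1) * (u * (1 - t)) := by
    rw [norm_smul, Real.norm_eq_abs]
    exact abs_one_sub_mul_le hq ht0 ht1 hu (by linarith)
  have hlow : min 1 (q + 1) * (u * (1 - t)) ≤ ‖A - t ^ q • B‖ := by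
    have h1 := le_sub_mul hq ht0 ht1 hu hκ (by linarith [norm_nonneg B])
    have h2 := norm_sub_norm_le A (t ^ q • B)
    rw [norm_smul, Real.norm_eq_abs, abs_of_pos hr] at h2
    rw [← hB, ← hA, add_sub_cancel_left, add_sub_cancel_left] at h1
    rw [← hA]
    linarith
  have hd : u * (1 - t) ≤ ‖A - B‖ := by
    have := norm_sub_norm_le A B
    linarith
  constructor
  · have e : A - B = (A - t ^ q • B) - (1 - t ^ q) • B := by module
    have h1 : ‖A - B‖ ≤ ‖A - t ^ q • B‖ + ‖(1 - t ^ q) • B‖ := by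
      conv_lhs => rw [e]
      exact norm_sub_le _ _
    have h2 : max 1 (q + 1) * (u * (1 - t)) ≤
        max 1 (q + 1) / min 1 (q + 1) * ‖A - t ^ q • B‖ := by
      calc max 1 (q + 1) * (u * (1 - t))
          = max 1 (q + 1) / min 1 (q + 1) * (min 1 (q + 1) * (u * (1 - t))) := by
            field_simp
        _ ≤ _ := by gcongr
    rw [coreConst, add_mul, one_mul]
    linarith
  · have e : A - t ^ q • B = (A - B) + (1 - t ^ q) • B := by module
    have h1 : ‖A - t ^ q • B‖ ≤ ‖A - B‖ + ‖(1 - t ^ q) • B‖ := by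
      conv_lhs => rw [e]
      exact norm_add_le _ _
    have h2 : max 1 (q + 1) * (u * (1 - t)) ≤
        max 1 (q + 1) / min 1 (q + 1) * ‖A - B‖ := by
      have : max 1 (q + 1) ≤ max 1 (q + 1) / min 1 (q + 1) :=
        le_div_self hM.le hm (min_le_left _ _)
      have hn : 0 ≤ u * (1 - t) := mul_nonneg hu.le (by linarith)
      gcongr
    rw [coreConst, add_mul, one_mul]
    linarith

/-- The comparison with `κ + ‖A‖` as the weight, `‖A‖` being the larger of the two norms. -/
lemma weighted_comparable {q κ : ℝ} (hq : -1 < q) (hκ : 0 ≤ κ) (A B : E) (hBA : ‖B‖ ≤ ‖A‖) :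
    (κ + ‖A‖) ^ q * ‖A - B‖ ≤
        coreConst q * ‖(κ + ‖A‖) ^ q • A - (κ + ‖B‖) ^ q • B‖ ∧
      ‖(κ + ‖A‖) ^ q • A - (κ + ‖B‖) ^ q • B‖ ≤
        coreConst q * ((κ + ‖A‖) ^ q * ‖A - B‖) := by
  have hK := one_le_coreConst hq
  -- For `B = 0` the ratio `t` may vanish, and `t ^ q` is then a junk value if `q < 0`.
  rcases eq_or_ne B 0 with rfl | hB0
  · have hα : 0 ≤ (κ + ‖A‖) ^ q := by positivity
    have h0 : 0 ≤ (κ + ‖A‖) ^ q * ‖A‖ := by positivity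
    simp only [sub_zero, smul_zero, norm_smul, Real.norm_eq_abs, abs_of_nonneg hα]
    exact ⟨le_mul_of_one_le_left h0 hK, le_mul_of_one_le_left h0 hK⟩
  · have hb : 0 < ‖B‖ := norm_pos_iff.2 hB0
    have hv : 0 < κ + ‖B‖ := by positivity
    have hu : 0 < κ + ‖A‖ := by linarith
    have ht : (κ + ‖B‖) / (κ + ‖A‖) * (κ + ‖A‖) = κ + ‖B‖ := div_mul_cancel₀ _ hu.ne'
    have hα : 0 < (κ + ‖A‖) ^ q := Real.rpow_pos_of_pos hu q
    obtain ⟨h1, h2⟩ := norm_sub_comparable hq hκ A B hu (div_pos hv hu)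
      ((div_le_one hu).2 (by linarith)) rfl ht.symm
    have e : (κ + ‖A‖) ^ q • A - (κ + ‖B‖) ^ q • B =
        (κ + ‖A‖) ^ q • (A - ((κ + ‖B‖) / (κ + ‖A‖)) ^ q • B) := by
      rw [smul_sub, smul_smul, Real.div_rpow hv.le hu.le, mul_div_cancel₀ _ hα.ne']
    rw [e, norm_smul, Real.norm_eq_abs, abs_of_pos hα, mul_left_comm, mul_left_comm (coreConst q)]
    exact ⟨by gcongr, by gcongr⟩

lemma rpow_le_of_comparable {q x y : ℝ} (hx : 0 ≤ x) (hy : 0 ≤ y) (hxy : x ≤ 3 * y)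
    (hyx : y ≤ 3 * x) : x ^ q ≤ 3 ^ |q| * y ^ q := by
  rcases hy.eq_or_lt with rfl | hy
  · obtain rfl : x = 0 := by linarith
    exact le_mul_of_one_le_left (by positivity) (Real.one_le_rpow (by norm_num) (abs_nonneg q))
  rcases le_total 0 q with h | h
  · rw [abs_of_nonneg h, ← Real.mul_rpow (by norm_num) hy.le]
    exact Real.rpow_le_rpow hx hxy h
  · rw [abs_of_nonpos h, Real.rpow_neg (by norm_num), ← Real.inv_rpow (by norm_num),
      ← Real.mul_rpow (by norm_num) hy.le]
    exact Real.rpow_le_rpow_of_nonpos (by positivity) (by linarith) h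

lemma shifted_comparable {q κ : ℝ} (hq : -1 < q) (hκ : 0 ≤ κ) (A B : E) :
    (κ + ‖A‖ + ‖A - B‖) ^ q * ‖A - B‖ ≤
        3 ^ |q| * coreConst q * ‖(κ + ‖A‖) ^ q • A - (κ + ‖B‖) ^ q • B‖ ∧
      ‖(κ + ‖A‖) ^ q • A - (κ + ‖B‖) ^ q • B‖ ≤
        3 ^ |q| * coreConst q * ((κ + ‖A‖ + ‖A - B‖) ^ q * ‖A - B‖) := by
  have hK := one_le_coreConst hq
  have ha := norm_nonneg A
  have hb := norm_nonneg B
  have hd := norm_nonneg (A - B)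
  have hdab : ‖A - B‖ ≤ ‖A‖ + ‖B‖ := norm_sub_le A B
  have hbad : ‖B‖ ≤ ‖A‖ + ‖A - B‖ := by
    have := norm_sub_norm_le B A
    rw [norm_sub_rev] at this
    linarith
  -- `w` stands for `κ + max ‖A‖ ‖B‖`, to which the shifted weight is comparable.
  have main : ∀ w D : ℝ, 0 ≤ w → w ≤ κ + ‖A‖ + ‖A - B‖ → κ + ‖A‖ + ‖A - B‖ ≤ 3 * w →
      w ^ q * ‖A - B‖ ≤ coreConst q * D → D ≤ coreConst q * (w ^ q * ‖A - B‖) →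
      (κ + ‖A‖ + ‖A - B‖) ^ q * ‖A - B‖ ≤ 3 ^ |q| * coreConst q * D ∧
        D ≤ 3 ^ |q| * coreConst q * ((κ + ‖A‖ + ‖A - B‖) ^ q * ‖A - B‖) := by
    intro w D hw h1 h2 h3 h4
    have e1 := rpow_le_of_comparable (q := q) (x := κ + ‖A‖ + ‖A - B‖) (y := w)
      (by positivity) hw h2 (by linarith)
    have e2 := rpow_le_of_comparable (q := q) (x := w) (y := κ + ‖A‖ + ‖A - B‖) hw
      (by positivity) (by linarith) h2
    constructor
    · calc (κ + ‖A‖ + ‖A - B‖) ^ q * ‖A - B‖ ≤ (3 ^ |q| * w ^ q) * ‖A - B‖ := by gcongr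
        _ = 3 ^ |q| * (w ^ q * ‖A - B‖) := by ring
        _ ≤ 3 ^ |q| * (coreConst q * D) := by gcongr
        _ = _ := by ring
    · calc D ≤ coreConst q * (w ^ q * ‖A - B‖) := h4
        _ ≤ coreConst q * ((3 ^ |q| * (κ + ‖A‖ + ‖A - B‖) ^ q) * ‖A - B‖) := by gcongr
        _ = _ := by ring
  rcases le_total ‖B‖ ‖A‖ with h | h
  · obtain ⟨h1, h2⟩ := weighted_comparable hq hκ A B h
    exact main _ _ (by positivity) (by linarith) (by linarith) h1 h2
  · obtain ⟨h1, h2⟩ := weighted_comparable hq hκ B A h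
    rw [norm_sub_rev B A, norm_sub_rev (_ • B)] at h1 h2
    exact main _ _ (by positivity) (by linarith) (by linarith) h1 h2

end NormedSpace

section Frobenius

open scoped Matrix.Norms.Frobenius

lemma frobNorm_eq_norm {n : ℕ} (A : Matrix (Fin n) (Fin n) ℝ) : frobNorm A = ‖A‖ := by
  rw [frobNorm, Matrix.frobenius_norm_def, Real.sqrt_eq_rpow]
  simp

lemma frobNorm_comparable {q κ : ℝ} (hq : -1 < q) (hκ : 0 ≤ κ) {n : ℕ}
    (A B : Matrix (Fin n) (Fin n) ℝ) :
    (κ + frobNorm A + frobNorm (A - B)) ^ q * frobNorm (A - B) ≤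
        3 ^ |q| * coreConst q *
          frobNorm ((κ + frobNorm A) ^ q • A - (κ + frobNorm B) ^ q • B) ∧
      frobNorm ((κ + frobNorm A) ^ q • A - (κ + frobNorm B) ^ q • B) ≤
        3 ^ |q| * coreConst q *
          ((κ + frobNorm A + frobNorm (A - B)) ^ q * frobNorm (A - B)) := by
  simp only [frobNorm_eq_norm]
  exact shifted_comparable hq hκ A B

end Frobenius

theorem stmt_3 (p : ℝ) (hp : 1 < p) :
    ∃ c C : ℝ, 0 < c ∧ c ≤ C ∧
      ∀ (n : ℕ), 1 ≤ n → ∀ κ : ℝ, 0 ≤ κ →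
        ∀ A B : Matrix (Fin n) (Fin n) ℝ,
          c * ((κ + frobNorm A + frobNorm (A - B)) ^ (p - 2) * frobNorm (A - B)) ≤
              frobNorm (Smap p κ A - Smap p κ B) ∧
          frobNorm (Smap p κ A - Smap p κ B) ≤
              C * ((κ + frobNorm A + frobNorm (A - B)) ^ (p - 2) * frobNorm (A - B)) := by
  have hq : -1 < p - 2 := by linarith
  have hK : 1 ≤ 3 ^ |p - 2| * coreConst (p - 2) :=
    one_le_mul_of_one_le_of_one_le (Real.one_le_rpow (by norm_num) (abs_nonneg _))
      (one_le_coreConst hq)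
  have hK0 : 0 < 3 ^ |p - 2| * coreConst (p - 2) := by linarith
  refine ⟨(3 ^ |p - 2| * coreConst (p - 2))⁻¹, 3 ^ |p - 2| * coreConst (p - 2),
    inv_pos.2 hK0, (inv_le_one_of_one_le₀ hK).trans hK, ?_⟩
  intro n _ κ hκ A B
  obtain ⟨h1, h2⟩ := frobNorm_comparable hq hκ A B
  exact ⟨(inv_mul_le_iff₀ hK0).2 h1, h2⟩
end

section
/- Let n ≥ 1 and p ∈ (1,∞). For every δ > 0 there exists a constant C_δ ≥ 1, depending only on p and δ, such that for every κ ≥ 0 and all n×n real matrices A, B, R one has (S(A) − S(B)) : (R − B) ≤ δ·|V(A) − V(B)|² + C_δ·|V(R) − V(B)|². -/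
/-!
All estimates are about the maps `ξ ↦ (κ + ‖ξ‖) ^ q • ξ` with `q > -1` on a real inner product space;
`S` is the case `q = p - 2` and `V` the case `q = (p - 2) / 2`. Such a map satisfies
`‖F A - F B‖ ≈ (κ + ‖B‖ + ‖A - B‖) ^ q * ‖A - B‖` with constants depending only on `q`
(`norm_powMap_sub_le`, `exists_le_norm_powMap_sub`). By symmetry one may take `‖B‖ ≤ ‖A‖`. Then
`F A - F B` is `(κ + ‖A‖) ^ q • (A - B)` plus an error which, by Bernoulli's inequality
(`abs_rpow_sub_rpow_mul_le`), is at most `|q|` times the main term; this gives the upper bound, and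
for `q < 0` also the lower one. For `q ≥ 0` the lower bound comes from pairing with `A - B`.

Writing `b = κ + ‖B‖`, `d = ‖A - B‖`, `e = ‖R - B‖`, the theorem thus reduces to a Young-type
inequality
`(b + d) ^ (p - 2) * d * e ≤ η * (b + d) ^ (p - 2) * d ^ 2 + C * (b + e) ^ (p - 2) * e ^ 2`
(`young_shifted`). If `e ≤ η * d` the first term on the right suffices. Otherwise `d ≤ e / η`, and
monotonicity of `t ↦ (b + t) ^ (p - 2) * t` leads to the second term.
-/

open Real MeasureTheory

/-! ### Scalar inequalities for powers -/

section Scalar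

/-- Comparable bases have comparable powers, whatever the sign of the exponent. -/
lemma rpow_le_of_comparable_s4 {q L u w : ℝ} (hu : 0 < u) (hw : 0 < w) (hL : 1 ≤ L)
    (huw : u ≤ L * w) (hwu : w ≤ L * u) : u ^ q ≤ L ^ |q| * w ^ q := by
  have hL0 : 0 < L := by linarith
  rcases le_total 0 q with hq | hq
  · rw [abs_of_nonneg hq, ← Real.mul_rpow hL0.le hw.le]
    exact Real.rpow_le_rpow hu.le huw hq
  · rw [abs_of_nonpos hq]
    have h := Real.rpow_le_rpow_of_nonpos hw hwu hq
    rw [Real.mul_rpow hL0.le hu.le] at h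
    calc u ^ q = L ^ (-q) * (L ^ q * u ^ q) := by
          rw [← mul_assoc, ← Real.rpow_add hL0]; simp
      _ ≤ L ^ (-q) * w ^ q := by gcongr

/-- Bernoulli's inequality for the exponent `q + 1`, applied to the ratio `y / x`. -/
lemma abs_rpow_sub_rpow_mul_le {q x y : ℝ} (hq : -1 < q) (hx : 0 < x) (hy : 0 ≤ y)
    (hyx : y ≤ x) : |x ^ q - y ^ q| * y ≤ |q| * x ^ q * (x - y) := by
  rcases hy.eq_or_lt with rfl | hy
  · simp only [mul_zero, sub_zero]; positivity
  obtain ⟨s, hs, rfl⟩ : ∃ s, 0 < s ∧ y = s * x := ⟨y / x, by positivity, by field_simp⟩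
  have hs1 : s ≤ 1 := by
    by_contra! h
    nlinarith
  have hmul : s ^ q * s = s ^ (q + 1) := by rw [Real.rpow_add hs, Real.rpow_one]
  have key : |1 - s ^ q| * s ≤ |q| * (1 - s) := by
    rcases le_total 0 q with h | h
    · have h1 : s ^ q ≤ 1 := Real.rpow_le_one hs.le hs1 h
      have h2 := one_add_mul_self_le_rpow_one_add (s := s - 1) (by linarith)
        (p := q + 1) (by linarith)
      rw [abs_of_nonneg (by linarith), abs_of_nonneg h]
      rw [add_sub_cancel] at h2
      linarith
    · have h1 : 1 ≤ s ^ q := Real.one_le_rpow_of_pos_of_le_one_of_nonpos hs hs1 h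
      have h2 := rpow_one_add_le_one_add_mul_self (s := s - 1) (by linarith)
        (p := q + 1) (by linarith) (by linarith)
      rw [abs_of_nonpos (by linarith), abs_of_nonpos h]
      rw [add_sub_cancel] at h2
      linarith
  rw [Real.mul_rpow hs.le hx.le]
  have hxq : 0 < x ^ q := Real.rpow_pos_of_pos hx q
  have : x ^ q - s ^ q * x ^ q = (1 - s ^ q) * x ^ q := by ring
  rw [this, abs_mul, abs_of_pos hxq]
  calc |1 - s ^ q| * x ^ q * (s * x) = (|1 - s ^ q| * s) * (x ^ q * x) := by ring
    _ ≤ (|q| * (1 - s)) * (x ^ q * x) := by gcongr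
    _ = _ := by ring

lemma shifted_mono {q b d t : ℝ} (hq : -1 < q) (hb : 0 ≤ b) (hd : 0 ≤ d) (hdt : d ≤ t) :
    (b + d) ^ q * d ≤ (b + t) ^ q * t := by
  rcases hd.eq_or_lt with rfl | hd
  · simp only [mul_zero]; positivity
  have ht : 0 < t := by linarith
  -- `(b + t) ^ q * t = (b + t) ^ (q + 1) * (t / (b + t))` is a product of increasing functions.
  have e : ∀ u : ℝ, 0 < u → (b + u) ^ q * u = (b + u) ^ (q + 1) * (u / (b + u)) := by
    intro u hu
    have : 0 < b + u := by linarith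
    rw [Real.rpow_add this, Real.rpow_one]
    field_simp
  rw [e d hd, e t ht]
  have h1 : (b + d) ^ (q + 1) ≤ (b + t) ^ (q + 1) :=
    Real.rpow_le_rpow (by linarith) (by linarith) (by linarith)
  have h2 : d / (b + d) ≤ t / (b + t) := by
    rw [div_le_div_iff₀ (by linarith) (by linarith)]
    nlinarith
  gcongr

/-- A Young-type inequality for the shifted power `t ↦ (b + t) ^ q * t ^ 2`, uniform in `b`. -/
lemma young_shifted {q η : ℝ} (hq : -1 < q) (hη : 0 < η) :
    ∃ C : ℝ, 0 < C ∧ ∀ b d e : ℝ, 0 ≤ b → 0 ≤ d → 0 ≤ e →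
      (b + d) ^ q * d * e ≤ η * ((b + d) ^ q * d ^ 2) + C * ((b + e) ^ q * e ^ 2) := by
  set L : ℝ := max 1 (1 / η) with hL
  have hL1 : 1 ≤ L := le_max_left _ _
  have hL0 : 0 < L := by linarith
  refine ⟨L ^ |q| * L, by positivity, fun b d e hb hd he => ?_⟩
  rcases he.eq_or_lt with rfl | he
  · have : 0 ≤ (b + d) ^ q * d ^ 2 := by positivity
    simp only [mul_zero]
    positivity
  rcases le_total e (η * d) with h | h
  · calc (b + d) ^ q * d * e ≤ (b + d) ^ q * d * (η * d) := by gcongr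
      _ = η * ((b + d) ^ q * d ^ 2) := by ring
      _ ≤ _ := le_add_of_nonneg_right (by positivity)
  · have hdL : d ≤ L * e := by
      calc d ≤ 1 / η * e := by rw [one_div_mul_eq_div, le_div_iff₀ hη]; linarith
        _ ≤ L * e := by gcongr; exact le_max_right _ _
    have h1 := shifted_mono hq hb hd hdL
    have h2 : (b + L * e) ^ q ≤ L ^ |q| * (b + e) ^ q :=
      rpow_le_of_comparable_s4 (by positivity) (by positivity) hL1 (by nlinarith)
        (by nlinarith [mul_nonneg (sub_nonneg.2 hL1) he.le,
          mul_nonneg (sub_nonneg.2 hL1) (by positivity : 0 ≤ b + L * e)])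
    calc (b + d) ^ q * d * e ≤ ((b + L * e) ^ q * (L * e)) * e := by gcongr
      _ ≤ ((L ^ |q| * (b + e) ^ q) * (L * e)) * e := by gcongr
      _ = L ^ |q| * L * ((b + e) ^ q * e ^ 2) := by ring
      _ ≤ _ := le_add_of_nonneg_left (by positivity)

end Scalar

/-! ### Two-sided estimates for power maps in an inner product space -/

section Vector

variable {E : Type*} [NormedAddCommGroup E] [InnerProductSpace ℝ E]

/-- The map `ξ ↦ (κ + ‖ξ‖) ^ q • ξ`, of which `Smap` and `Vmap` are instances. -/
noncomputable def powMap (q κ : ℝ) (A : E) : E := ((κ + ‖A‖) ^ q) • A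

/-- The deviation of `powMap q κ A - powMap q κ B` from `(κ + ‖A‖) ^ q • (A - B)` is at most
`|q|` times the norm of the latter. -/
lemma norm_powMap_sub_sub_le {q κ : ℝ} (hq : -1 < q) (hκ : 0 ≤ κ) {A B : E} (hBA : ‖B‖ ≤ ‖A‖)
    (hx : 0 < κ + ‖A‖) :
    ‖powMap q κ A - powMap q κ B - ((κ + ‖A‖) ^ q) • (A - B)‖
      ≤ |q| * (κ + ‖A‖) ^ q * ‖A - B‖ := by
  have e : powMap q κ A - powMap q κ B - ((κ + ‖A‖) ^ q) • (A - B)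
      = ((κ + ‖A‖) ^ q - (κ + ‖B‖) ^ q) • B := by
    simp only [powMap, smul_sub, sub_smul]; abel
  rw [e, norm_smul, Real.norm_eq_abs]
  have h := abs_rpow_sub_rpow_mul_le (y := κ + ‖B‖) hq hx (by positivity) (by linarith)
  have hAB := norm_sub_norm_le A B
  calc _ ≤ |(κ + ‖A‖) ^ q - (κ + ‖B‖) ^ q| * (κ + ‖B‖) := by gcongr; linarith
    _ ≤ |q| * (κ + ‖A‖) ^ q * (κ + ‖A‖ - (κ + ‖B‖)) := h
    _ ≤ _ := by gcongr; linarith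

lemma norm_powMap_sub_le_of_norm_le {q κ : ℝ} (hq : -1 < q) (hκ : 0 ≤ κ) {A B : E}
    (hBA : ‖B‖ ≤ ‖A‖) (hx : 0 < κ + ‖A‖) :
    ‖powMap q κ A - powMap q κ B‖ ≤ (1 + |q|) * ((κ + ‖A‖) ^ q * ‖A - B‖) := by
  have h := norm_powMap_sub_sub_le hq hκ hBA hx
  have h2 := norm_sub_norm_le (powMap q κ A - powMap q κ B) (((κ + ‖A‖) ^ q) • (A - B))
  rw [norm_smul, Real.norm_of_nonneg (by positivity)] at h2
  linarith

/-- The constant depends on `q` only, not on the space. -/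
lemma exists_le_norm_powMap_sub_of_norm_le {q : ℝ} (hq : -1 < q) :
    ∃ c : ℝ, 0 < c ∧ ∀ (E : Type) [NormedAddCommGroup E] [InnerProductSpace ℝ E],
      ∀ κ : ℝ, 0 ≤ κ → ∀ A B : E, ‖B‖ ≤ ‖A‖ → 0 < κ + ‖A‖ →
      c * ((κ + ‖A‖) ^ q * ‖A - B‖) ≤ ‖powMap q κ A - powMap q κ B‖ := by
  rcases lt_or_ge q 0 with h0 | h0
  · refine ⟨1 - |q|, by rw [abs_of_neg h0]; linarith, fun E _ _ κ hκ A B hBA hx => ?_⟩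
    have h := norm_powMap_sub_sub_le hq hκ hBA hx
    have h2 := norm_sub_norm_le (((κ + ‖A‖) ^ q) • (A - B)) (powMap q κ A - powMap q κ B)
    rw [norm_smul, Real.norm_of_nonneg (by positivity),
      norm_sub_rev (((κ + ‖A‖) ^ q) • (A - B))] at h2
    linarith
  · refine ⟨1 / 2, by norm_num, fun E _ _ κ hκ A B hBA hx => ?_⟩
    rcases (norm_nonneg (A - B)).eq_or_lt with hd | hd
    · rw [← hd]; simp
    have hle : (κ + ‖B‖) ^ q ≤ (κ + ‖A‖) ^ q :=
      Real.rpow_le_rpow (by positivity) (by linarith) h0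
    have hy : 0 ≤ (κ + ‖B‖) ^ q := by positivity
    -- With `x`, `y` the two scalar factors, `⟪F A - F B, A - B⟫` is
    -- `(x + y) / 2 * ‖A - B‖ ^ 2 + (x - y) * (‖A‖ ^ 2 - ‖B‖ ^ 2) / 2`.
    have hin : 1 / 2 * (κ + ‖A‖) ^ q * ‖A - B‖ ^ 2
        ≤ inner ℝ (powMap q κ A - powMap q κ B) (A - B) := by
      have e1 := norm_sub_sq_real A B
      have e2 : inner ℝ (powMap q κ A - powMap q κ B) (A - B)
          = (κ + ‖A‖) ^ q * ‖A‖ ^ 2 + (κ + ‖B‖) ^ q * ‖B‖ ^ 2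
            - ((κ + ‖A‖) ^ q + (κ + ‖B‖) ^ q) * inner ℝ A B := by
        simp only [powMap, inner_sub_left, inner_sub_right, real_inner_smul_left,
          real_inner_self_eq_norm_sq, real_inner_comm A B]
        ring
      have e3 : 0 ≤ ((κ + ‖A‖) ^ q - (κ + ‖B‖) ^ q) * (‖A‖ ^ 2 - ‖B‖ ^ 2) :=
        mul_nonneg (by linarith) (by nlinarith [norm_nonneg B])
      have e4 := mul_nonneg hy (sq_nonneg ‖A - B‖)
      rw [e2]
      rw [e1] at e4 ⊢
      nlinarith
    have hcs := real_inner_le_norm (powMap q κ A - powMap q κ B) (A - B)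
    refine le_of_mul_le_mul_right ?_ hd
    calc _ = 1 / 2 * (κ + ‖A‖) ^ q * ‖A - B‖ ^ 2 := by ring
      _ ≤ _ := hin.trans hcs

lemma norm_powMap_sub_le {q κ : ℝ} (hq : -1 < q) (hκ : 0 ≤ κ) (A B : E) :
    ‖powMap q κ A - powMap q κ B‖
      ≤ (1 + |q|) * 3 ^ |q| * ((κ + ‖B‖ + ‖A - B‖) ^ q * ‖A - B‖) := by
  rcases eq_or_ne A B with rfl | hne
  · simp
  have hd : 0 < ‖A - B‖ := norm_pos_iff.2 (sub_ne_zero.2 hne)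
  have t1 := norm_sub_le A B
  have t2 := norm_sub_norm_le A B
  have nA := norm_nonneg A
  have nB := norm_nonneg B
  have main : ∀ x : ℝ, 0 < x → x ≤ κ + ‖B‖ + ‖A - B‖ → κ + ‖B‖ + ‖A - B‖ ≤ 3 * x →
      (1 + |q|) * (x ^ q * ‖A - B‖)
        ≤ (1 + |q|) * 3 ^ |q| * ((κ + ‖B‖ + ‖A - B‖) ^ q * ‖A - B‖) := by
    intro x hx h1 h2
    have := rpow_le_of_comparable_s4 (q := q) (L := 3) hx (hx.trans_le h1) (by norm_num)
      (by linarith) h2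
    calc _ ≤ (1 + |q|) * ((3 ^ |q| * (κ + ‖B‖ + ‖A - B‖) ^ q) * ‖A - B‖) := by gcongr
      _ = _ := by ring
  rcases le_total ‖B‖ ‖A‖ with h | h
  · have hx : 0 < κ + ‖A‖ := by linarith
    exact (norm_powMap_sub_le_of_norm_le hq hκ h hx).trans
      (main _ hx (by linarith) (by linarith))
  · have hx : 0 < κ + ‖B‖ := by linarith
    have := norm_powMap_sub_le_of_norm_le hq hκ h hx
    rw [norm_sub_rev, norm_sub_rev B A] at this
    exact this.trans (main _ hx (by linarith) (by linarith))

/-- The constant depends on `q` only, not on the space. -/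
lemma exists_le_norm_powMap_sub {q : ℝ} (hq : -1 < q) :
    ∃ c : ℝ, 0 < c ∧ ∀ (E : Type) [NormedAddCommGroup E] [InnerProductSpace ℝ E],
      ∀ κ : ℝ, 0 ≤ κ → ∀ A B : E,
      c * ((κ + ‖B‖ + ‖A - B‖) ^ q * ‖A - B‖) ≤ ‖powMap q κ A - powMap q κ B‖ := by
  obtain ⟨c, hc, H⟩ := exists_le_norm_powMap_sub_of_norm_le hq
  refine ⟨c / 3 ^ |q|, by positivity, fun E _ _ κ hκ A B => ?_⟩
  rcases eq_or_ne A B with rfl | hne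
  · simp
  have hd : 0 < ‖A - B‖ := norm_pos_iff.2 (sub_ne_zero.2 hne)
  have t1 := norm_sub_le A B
  have t2 := norm_sub_norm_le A B
  have nA := norm_nonneg A
  have nB := norm_nonneg B
  have main : ∀ x : ℝ, 0 < x → x ≤ κ + ‖B‖ + ‖A - B‖ → κ + ‖B‖ + ‖A - B‖ ≤ 3 * x →
      c / 3 ^ |q| * ((κ + ‖B‖ + ‖A - B‖) ^ q * ‖A - B‖) ≤ c * (x ^ q * ‖A - B‖) := by
    intro x hx h1 h2
    have := rpow_le_of_comparable_s4 (q := q) (L := 3) (hx.trans_le h1) hx (by norm_num)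
      h2 (by linarith)
    calc _ ≤ c / 3 ^ |q| * ((3 ^ |q| * x ^ q) * ‖A - B‖) := by gcongr
      _ = _ := by field_simp
  rcases le_total ‖B‖ ‖A‖ with h | h
  · have hx : 0 < κ + ‖A‖ := by linarith
    exact (main _ hx (by linarith) (by linarith)).trans (H E κ hκ A B h hx)
  · have hx : 0 < κ + ‖B‖ := by linarith
    have := H E κ hκ B A h hx
    rw [norm_sub_rev (powMap q κ B), norm_sub_rev B A] at this
    exact (main _ hx (by linarith) (by linarith)).trans this

end Vector

/-! ### Transfer to matrices with the Frobenius norm -/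

section Matrices

/-- A matrix as a vector of the Euclidean space indexed by pairs, on which the norm and the inner
product are those of Frobenius. -/
noncomputable def toEuc {n : ℕ} (A : Matrix (Fin n) (Fin n) ℝ) :
    EuclideanSpace ℝ (Fin n × Fin n) :=
  WithLp.toLp 2 (fun ij => A ij.1 ij.2)

lemma frobNorm_eq {n : ℕ} (A : Matrix (Fin n) (Fin n) ℝ) : frobNorm A = ‖toEuc A‖ := by
  simp [frobNorm, toEuc, EuclideanSpace.norm_eq, Fintype.sum_prod_type]

lemma frobInner_eq {n : ℕ} (A B : Matrix (Fin n) (Fin n) ℝ) :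
    frobInner A B = inner ℝ (toEuc A) (toEuc B) := by
  simp [frobInner, toEuc, PiLp.inner_apply, Fintype.sum_prod_type, mul_comm]

lemma toEuc_sub {n : ℕ} (A B : Matrix (Fin n) (Fin n) ℝ) :
    toEuc (A - B) = toEuc A - toEuc B := rfl

lemma toEuc_Smap {n : ℕ} (p κ : ℝ) (A : Matrix (Fin n) (Fin n) ℝ) :
    toEuc (Smap p κ A) = powMap (p - 2) κ (toEuc A) := by
  rw [powMap, ← frobNorm_eq]; rfl

lemma toEuc_Vmap {n : ℕ} (p κ : ℝ) (A : Matrix (Fin n) (Fin n) ℝ) :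
    toEuc (Vmap p κ A) = powMap ((p - 2) / 2) κ (toEuc A) := by
  rw [powMap, ← frobNorm_eq]; rfl

end Matrices

theorem stmt_4 (p : ℝ) (hp : 1 < p) (δ : ℝ) (hδ : 0 < δ) :
    ∃ Cδ : ℝ, 1 ≤ Cδ ∧
      ∀ (n : ℕ), 1 ≤ n → ∀ κ : ℝ, 0 ≤ κ →
        ∀ A B R : Matrix (Fin n) (Fin n) ℝ,
          frobInner (Smap p κ A - Smap p κ B) (R - B) ≤
            δ * frobNorm (Vmap p κ A - Vmap p κ B) ^ 2 +
              Cδ * frobNorm (Vmap p κ R - Vmap p κ B) ^ 2 := by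
  have hq : -1 < p - 2 := by linarith
  have hq2 : -1 < (p - 2) / 2 := by linarith
  obtain ⟨c, hc, hV⟩ := exists_le_norm_powMap_sub hq2
  set K : ℝ := (1 + |p - 2|) * 3 ^ |p - 2| with hK
  have hK0 : 0 < K := by positivity
  obtain ⟨C, hC, hY⟩ := young_shifted (q := p - 2) (η := δ * c ^ 2 / K) hq (by positivity)
  refine ⟨max 1 (K * C / c ^ 2), le_max_left _ _, fun n _ κ hκ A B R => ?_⟩
  simp only [frobNorm_eq, frobInner_eq, toEuc_sub, toEuc_Smap, toEuc_Vmap]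
  generalize toEuc A = a
  generalize toEuc B = b
  generalize toEuc R = r
  have hS := norm_powMap_sub_le hq hκ a b
  have hV2 : ∀ z, c ^ 2 * ((κ + ‖b‖ + ‖z - b‖) ^ (p - 2) * ‖z - b‖ ^ 2)
      ≤ ‖powMap ((p - 2) / 2) κ z - powMap ((p - 2) / 2) κ b‖ ^ 2 := by
    intro z
    have h := pow_le_pow_left₀ (by positivity) (hV _ κ hκ z b) 2
    have e : ((κ + ‖b‖ + ‖z - b‖) ^ ((p - 2) / 2)) ^ 2 = (κ + ‖b‖ + ‖z - b‖) ^ (p - 2) := by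
      rw [← Real.rpow_mul_natCast (by positivity)]
      congr 1
      push_cast
      ring
    rwa [mul_pow, mul_pow, e] at h
  have hy := hY (κ + ‖b‖) ‖a - b‖ ‖r - b‖ (by positivity) (norm_nonneg _) (norm_nonneg _)
  calc inner ℝ (powMap (p - 2) κ a - powMap (p - 2) κ b) (r - b)
      ≤ ‖powMap (p - 2) κ a - powMap (p - 2) κ b‖ * ‖r - b‖ := real_inner_le_norm _ _
    _ ≤ K * ((κ + ‖b‖ + ‖a - b‖) ^ (p - 2) * ‖a - b‖) * ‖r - b‖ := by gcongr
    _ = K * ((κ + ‖b‖ + ‖a - b‖) ^ (p - 2) * ‖a - b‖ * ‖r - b‖) := by ring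
    _ ≤ K * (δ * c ^ 2 / K * ((κ + ‖b‖ + ‖a - b‖) ^ (p - 2) * ‖a - b‖ ^ 2)
          + C * ((κ + ‖b‖ + ‖r - b‖) ^ (p - 2) * ‖r - b‖ ^ 2)) := by gcongr
    _ = δ * (c ^ 2 * ((κ + ‖b‖ + ‖a - b‖) ^ (p - 2) * ‖a - b‖ ^ 2))
          + K * C / c ^ 2 * (c ^ 2 * ((κ + ‖b‖ + ‖r - b‖) ^ (p - 2) * ‖r - b‖ ^ 2)) := by
        field_simp
    _ ≤ _ := by
        gcongr
        · exact hV2 a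
        · exact le_max_right _ _
        · exact hV2 r
end

section
/- Let p ∈ (1,∞). For every δ > 0 there exists a constant C_δ > 0, depending only on p and δ, such that for every κ ≥ 0 and all real numbers t, u ≥ 0 the following two inequalities hold: (i) t·u ≤ δ·φ_κ(t) + C_δ·φ_κ*(u), where φ_κ*(u) := sup_{s ≥ 0} (s·u − φ_κ(s)); and (ii) t·φ'_κ(u) + u·φ'_κ(t) ≤ δ·φ_κ(t) + C_δ·φ_κ(u). -/
/-!
Write `g t = (κ + t) ^ (p - 2) * t` for the derivative of the potential, `m = min (p - 1) 1` and
`M = max (p - 1) 1`. Since `l * (κ + t) ≤ κ + l * t ≤ κ + t` for `0 < l ≤ 1`, the function `g`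
scales uniformly in `κ`: `l ^ M * g t ≤ g (l * t) ≤ l ^ m * g t`. In particular `g` is monotone,
and `φ t` is comparable to `t * g t` with the constant `c = 2 ^ (-M) / 2`.

Fix `l ∈ (0, 1]` so small that `l ^ m ≤ c * δ / 2`.

* Inequality (ii): if `u ≤ l * t`, both products on the left are at most `l ^ m * (t * g t)`, which
  is absorbed into `δ * φ t`; if `l * t < u`, both are bounded by a multiple of `u * g u`.
* Inequality (i): if `u ≤ δ * c * g t`, then `t * u ≤ δ * φ t`. Otherwise the competitor `s = l * t`
  in the supremum satisfies `φ s ≤ l ^ m * l * t * g t ≤ s * u / 2`, hence `s * u / 2 ≤ φ* u`.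
  Here `φ` grows superlinearly, so the supremum defining `φ*` is taken over a bounded set and is
  genuine.
-/

open Real MeasureTheory

/-- The derivative of the shifted potential: φ'_κ(t) = (κ+t)^(p-2) t. -/
noncomputable def phiShiftDeriv (p κ t : ℝ) : ℝ := (κ + t) ^ (p - 2) * t

/-- The conjugate function φ_κ*(u) = sup over s ≥ 0 of (s·u − φ_κ(s)). -/
noncomputable def phiShiftConj (p κ u : ℝ) : ℝ :=
  sSup {y : ℝ | ∃ s : ℝ, 0 ≤ s ∧ y = s * u - phiShift p κ s}

theorem phiShiftDeriv_nonneg (p : ℝ) {κ t : ℝ} (hκ : 0 ≤ κ) (ht : 0 ≤ t) :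
    0 ≤ phiShiftDeriv p κ t := by
  unfold phiShiftDeriv
  positivity

/-- The upper scaling bound; the exponent `min (p - 1) 1` does not depend on the shift `κ`. -/
theorem phiShiftDeriv_scale_le (p : ℝ) {κ t l : ℝ} (hκ : 0 ≤ κ) (ht : 0 ≤ t)
    (hl : 0 < l) (hl1 : l ≤ 1) :
    phiShiftDeriv p κ (l * t) ≤ l ^ (min (p - 1) 1) * phiShiftDeriv p κ t := by
  rcases ht.eq_or_lt with rfl | ht
  · simp [phiShiftDeriv]
  unfold phiShiftDeriv
  have hlt : 0 < l * t := mul_pos hl ht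
  have h1 : l * (κ + t) ≤ κ + l * t := by nlinarith
  have h2 : κ + l * t ≤ κ + t := by nlinarith
  rcases le_total 2 p with h | h
  · rw [min_eq_right (by linarith), rpow_one]
    have := rpow_le_rpow (by positivity) h2 (by linarith : 0 ≤ p - 2)
    calc (κ + l * t) ^ (p - 2) * (l * t) ≤ (κ + t) ^ (p - 2) * (l * t) := by gcongr
      _ = _ := by ring
  · rw [min_eq_left (by linarith)]
    have := rpow_le_rpow_of_nonpos (by positivity) h1 (by linarith : p - 2 ≤ 0)
    have e : l ^ (p - 1) = l ^ (p - 2) * l := by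
      rw [← rpow_add_one hl.ne']; ring_nf
    calc (κ + l * t) ^ (p - 2) * (l * t) ≤ (l * (κ + t)) ^ (p - 2) * (l * t) := by gcongr
      _ = _ := by rw [mul_rpow hl.le (by positivity), e]; ring

/-- The lower scaling bound; the exponent `max (p - 1) 1` does not depend on the shift `κ`. -/
theorem phiShiftDeriv_le_scale (p : ℝ) {κ t l : ℝ} (hκ : 0 ≤ κ) (ht : 0 ≤ t)
    (hl : 0 < l) (hl1 : l ≤ 1) :
    l ^ (max (p - 1) 1) * phiShiftDeriv p κ t ≤ phiShiftDeriv p κ (l * t) := by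
  rcases ht.eq_or_lt with rfl | ht
  · simp [phiShiftDeriv]
  unfold phiShiftDeriv
  have hlt : 0 < l * t := mul_pos hl ht
  have h1 : l * (κ + t) ≤ κ + l * t := by nlinarith
  have h2 : κ + l * t ≤ κ + t := by nlinarith
  rcases le_total 2 p with h | h
  · rw [max_eq_left (by linarith)]
    have := rpow_le_rpow (by positivity) h1 (by linarith : 0 ≤ p - 2)
    have e : l ^ (p - 1) = l ^ (p - 2) * l := by
      rw [← rpow_add_one hl.ne']; ring_nf
    calc _ = (l * (κ + t)) ^ (p - 2) * (l * t) := by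
          rw [mul_rpow hl.le (by positivity), e]; ring
      _ ≤ _ := by gcongr
  · rw [max_eq_right (by linarith), rpow_one]
    have := rpow_le_rpow_of_nonpos (by positivity) h2 (by linarith : p - 2 ≤ 0)
    calc _ = (κ + t) ^ (p - 2) * (l * t) := by ring
      _ ≤ _ := by gcongr

theorem phiShiftDeriv_mono {p κ a b : ℝ} (hp : 1 < p) (hκ : 0 ≤ κ) (ha : 0 ≤ a) (hab : a ≤ b) :
    phiShiftDeriv p κ a ≤ phiShiftDeriv p κ b := by
  rcases ha.eq_or_lt with rfl | ha
  · simpa [phiShiftDeriv] using phiShiftDeriv_nonneg p hκ hab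
  have hb : 0 < b := ha.trans_le hab
  have h := phiShiftDeriv_scale_le p hκ hb.le (div_pos ha hb) ((div_le_one hb).2 hab)
  rw [div_mul_cancel₀ _ hb.ne'] at h
  have hm : 0 ≤ min (p - 1) 1 := le_min (by linarith) zero_le_one
  have h1 := rpow_le_one (div_pos ha hb).le ((div_le_one hb).2 hab) hm
  exact h.trans (mul_le_of_le_one_left (phiShiftDeriv_nonneg p hκ hb.le) h1)

theorem phiShiftDeriv_intervalIntegrable {p κ a b : ℝ} (hp : 1 < p) (hκ : 0 ≤ κ) (ha : 0 ≤ a)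
    (hb : 0 ≤ b) : IntervalIntegrable (phiShiftDeriv p κ) volume a b := by
  apply MonotoneOn.intervalIntegrable
  intro x hx y _ hxy
  exact phiShiftDeriv_mono hp hκ ((le_min ha hb).trans hx.1) hxy

theorem phiShift_eq_integral (p κ t : ℝ) :
    phiShift p κ t = ∫ s in (0:ℝ)..t, phiShiftDeriv p κ s := rfl

theorem phiShift_nonneg (p : ℝ) {κ t : ℝ} (hκ : 0 ≤ κ) (ht : 0 ≤ t) : 0 ≤ phiShift p κ t := by
  rw [phiShift_eq_integral]
  exact intervalIntegral.integral_nonneg ht fun s hs => phiShiftDeriv_nonneg p hκ hs.1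

theorem phiShift_le {p κ t : ℝ} (hp : 1 < p) (hκ : 0 ≤ κ) (ht : 0 ≤ t) :
    phiShift p κ t ≤ t * phiShiftDeriv p κ t := by
  rw [phiShift_eq_integral]
  have h := intervalIntegral.integral_mono_on ht
    (phiShiftDeriv_intervalIntegrable hp hκ le_rfl ht)
    (intervalIntegrable_const (c := phiShiftDeriv p κ t))
    fun s hs => phiShiftDeriv_mono hp hκ hs.1 hs.2
  simpa using h

/-- The potential is at least the integral of its derivative over `[t / 2, t]`, where the derivative
is comparable to its value at `t` by the lower scaling bound with `l = 1 / 2`. -/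
theorem le_phiShift {p κ t : ℝ} (hp : 1 < p) (hκ : 0 ≤ κ) (ht : 0 ≤ t) :
    (1 / 2 : ℝ) ^ (max (p - 1) 1) / 2 * (t * phiShiftDeriv p κ t) ≤ phiShift p κ t := by
  rw [phiShift_eq_integral]
  have ht2 : 0 ≤ 1 / 2 * t := by positivity
  have hle : 1 / 2 * t ≤ t := by linarith
  rw [← intervalIntegral.integral_add_adjacent_intervals
    (phiShiftDeriv_intervalIntegrable hp hκ le_rfl ht2)
    (phiShiftDeriv_intervalIntegrable hp hκ ht2 ht)]
  have h0 : 0 ≤ ∫ s in (0:ℝ)..(1 / 2 * t), phiShiftDeriv p κ s :=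
    intervalIntegral.integral_nonneg ht2 fun s hs => phiShiftDeriv_nonneg p hκ hs.1
  have h := intervalIntegral.integral_mono_on hle
    (intervalIntegrable_const (c := phiShiftDeriv p κ (1 / 2 * t)))
    (phiShiftDeriv_intervalIntegrable hp hκ ht2 ht)
    fun s hs => phiShiftDeriv_mono hp hκ ht2 hs.1
  rw [intervalIntegral.integral_const, smul_eq_mul] at h
  have hs := mul_le_mul_of_nonneg_left
    (phiShiftDeriv_le_scale p hκ ht (by norm_num : (0:ℝ) < 1 / 2) (by norm_num)) ht2
  nlinarith

/-- Superlinear growth of the potential makes the supremum defining the conjugate finite. -/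
theorem phiShiftConj_bddAbove {p κ u : ℝ} (hp : 1 < p) (hκ : 0 ≤ κ) (hu : 0 ≤ u) :
    BddAbove {y : ℝ | ∃ s : ℝ, 0 ≤ s ∧ y = s * u - phiShift p κ s} := by
  set c : ℝ := (1 / 2 : ℝ) ^ (max (p - 1) 1) / 2 with hc
  have hc0 : 0 < c := by positivity
  have hm : 0 < min (p - 1) 1 := lt_min (by linarith) zero_lt_one
  have hg1 : 0 < phiShiftDeriv p κ 1 := by unfold phiShiftDeriv; positivity
  -- Beyond the threshold `S`, the slope `c * g s` exceeds `u`.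
  obtain ⟨S, hS1, hS⟩ : ∃ S : ℝ, 1 ≤ S ∧ u / (c * phiShiftDeriv p κ 1) ≤ S ^ (min (p - 1) 1) :=
    (((Filter.eventually_ge_atTop 1).and
      ((tendsto_rpow_atTop hm).eventually_ge_atTop _))).exists
  have hS0 : 0 < S := by linarith
  have hgS : u ≤ c * phiShiftDeriv p κ S := by
    have h := phiShiftDeriv_scale_le p hκ hS0.le (inv_pos.2 hS0) (inv_le_one_of_one_le₀ hS1)
    rw [inv_mul_cancel₀ hS0.ne', inv_rpow hS0.le, inv_mul_eq_div,
      le_div_iff₀ (by positivity)] at h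
    rw [div_le_iff₀ (by positivity)] at hS
    nlinarith
  refine ⟨S * u, ?_⟩
  rintro y ⟨s, hs, rfl⟩
  rcases le_total s S with h | h
  · have := phiShift_nonneg p hκ hs
    nlinarith
  · have h1 := le_phiShift hp hκ hs
    have h2 := phiShiftDeriv_mono hp hκ hS0.le h
    have h3 : u ≤ c * phiShiftDeriv p κ s := hgS.trans (by gcongr)
    have h4 := mul_le_mul_of_nonneg_left h3 hs
    have h5 : 0 ≤ S * u := by positivity
    rw [← hc] at h1
    linarith

theorem le_phiShiftConj {p κ s u : ℝ} (hp : 1 < p) (hκ : 0 ≤ κ) (hs : 0 ≤ s) (hu : 0 ≤ u) :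
    s * u - phiShift p κ s ≤ phiShiftConj p κ u :=
  le_csSup (phiShiftConj_bddAbove hp hκ hu) ⟨s, hs, rfl⟩

theorem phiShiftConj_nonneg {p κ u : ℝ} (hp : 1 < p) (hκ : 0 ≤ κ) (hu : 0 ≤ u) :
    0 ≤ phiShiftConj p κ u := by
  simpa [phiShift] using le_phiShiftConj hp hκ le_rfl hu

theorem stmt_5 (p : ℝ) (hp : 1 < p) (δ : ℝ) (hδ : 0 < δ) :
    ∃ Cδ : ℝ, 0 < Cδ ∧
      ∀ κ : ℝ, 0 ≤ κ → ∀ t u : ℝ, 0 ≤ t → 0 ≤ u →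
        t * u ≤ δ * phiShift p κ t + Cδ * phiShiftConj p κ u ∧
        t * phiShiftDeriv p κ u + u * phiShiftDeriv p κ t ≤
          δ * phiShift p κ t + Cδ * phiShift p κ u := by
  set c : ℝ := (1 / 2 : ℝ) ^ (max (p - 1) 1) / 2 with hc
  have hc0 : 0 < c := by positivity
  have hm : 0 < min (p - 1) 1 := lt_min (by linarith) zero_lt_one
  obtain ⟨l, hl, hl1, hlm, hll⟩ : ∃ l : ℝ, 0 < l ∧ l ≤ 1 ∧ l ^ (min (p - 1) 1) ≤ c * δ / 2 ∧
      l ≤ l ^ (min (p - 1) 1) := by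
    have hη : 0 < min 1 (c * δ / 2) := lt_min one_pos (by positivity)
    have h1 : (min 1 (c * δ / 2)) ^ (min (p - 1) 1)⁻¹ ≤ 1 :=
      rpow_le_one hη.le (min_le_left _ _) (by positivity)
    refine ⟨(min 1 (c * δ / 2)) ^ (min (p - 1) 1)⁻¹, by positivity, h1, ?_, ?_⟩
    · rw [rpow_inv_rpow hη.le hm.ne']
      exact min_le_right _ _
    · exact self_le_rpow_of_le_one (by positivity) h1 (min_le_right _ _)
  have hL : 0 < l ^ (max (p - 1) 1) := by positivity
  refine ⟨2 / l + (1 / (l * c) + 1 / (l ^ (max (p - 1) 1) * c)), by positivity, ?_⟩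
  intro κ hκ t u ht hu
  have hgt := phiShiftDeriv_nonneg p hκ ht
  have hgu := phiShiftDeriv_nonneg p hκ hu
  have hφt := phiShift_nonneg p hκ ht
  have hφu := phiShift_nonneg p hκ hu
  have hct := le_phiShift hp hκ ht
  have hcu := le_phiShift hp hκ hu
  rw [← hc] at hct hcu
  have hlt : 0 ≤ l * t := by positivity
  have hscale := phiShiftDeriv_scale_le p hκ ht hl hl1
  constructor
  · have hconj := phiShiftConj_nonneg hp hκ hu
    rcases le_total u (δ * c * phiShiftDeriv p κ t) with h | h
    · have h1 : t * u ≤ δ * phiShift p κ t := by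
        calc t * u ≤ t * (δ * c * phiShiftDeriv p κ t) := by gcongr
          _ = δ * (c * (t * phiShiftDeriv p κ t)) := by ring
          _ ≤ _ := by gcongr
      exact h1.trans (le_add_of_nonneg_right (by positivity))
    · have h1 := le_phiShiftConj hp hκ hlt hu
      have h2 : phiShift p κ (l * t) ≤ l * t * u / 2 := by
        calc phiShift p κ (l * t) ≤ l * t * phiShiftDeriv p κ (l * t) := phiShift_le hp hκ hlt
          _ ≤ l * t * (l ^ (min (p - 1) 1) * phiShiftDeriv p κ t) := by gcongr
          _ ≤ l * t * (c * δ / 2 * phiShiftDeriv p κ t) := by gcongr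
          _ = l * t * (δ * c * phiShiftDeriv p κ t) / 2 := by ring
          _ ≤ _ := by gcongr
      have h3 : t * u ≤ 2 / l * phiShiftConj p κ u := by
        rw [div_mul_eq_mul_div, le_div_iff₀ hl]
        linarith
      have h4 : 0 ≤ δ * phiShift p κ t := by positivity
      have h5 : 0 ≤ (1 / (l * c) + 1 / (l ^ (max (p - 1) 1) * c)) * phiShiftConj p κ u := by
        positivity
      rw [add_mul (2 / l)]
      linarith
  · rcases le_total u (l * t) with h | h
    · have habs : l ^ (min (p - 1) 1) * (t * phiShiftDeriv p κ t) ≤ δ / 2 * phiShift p κ t := by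
        calc _ ≤ c * δ / 2 * (t * phiShiftDeriv p κ t) := by gcongr
          _ = δ / 2 * (c * (t * phiShiftDeriv p κ t)) := by ring
          _ ≤ _ := by gcongr
      have h1 : t * phiShiftDeriv p κ u ≤ l ^ (min (p - 1) 1) * (t * phiShiftDeriv p κ t) := by
        calc _ ≤ t * (l ^ (min (p - 1) 1) * phiShiftDeriv p κ t) := by
              gcongr
              exact (phiShiftDeriv_mono hp hκ hu h).trans hscale
          _ = _ := by ring
      have h2 : u * phiShiftDeriv p κ t ≤ l ^ (min (p - 1) 1) * (t * phiShiftDeriv p κ t) := by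
        calc _ ≤ l * t * phiShiftDeriv p κ t := by gcongr
          _ = l * (t * phiShiftDeriv p κ t) := by ring
          _ ≤ _ := by gcongr
      have h3 : 0 ≤ (2 / l + (1 / (l * c) + 1 / (l ^ (max (p - 1) 1) * c))) * phiShift p κ u := by
        positivity
      linarith
    · have h1 : t * phiShiftDeriv p κ u ≤ 1 / (l * c) * phiShift p κ u := by
        rw [div_mul_eq_mul_div, one_mul, le_div_iff₀ (by positivity)]
        calc _ = c * (l * t * phiShiftDeriv p κ u) := by ring
          _ ≤ c * (u * phiShiftDeriv p κ u) := by gcongr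
          _ ≤ _ := hcu
      have h2 : u * phiShiftDeriv p κ t ≤ 1 / (l ^ (max (p - 1) 1) * c) * phiShift p κ u := by
        rw [div_mul_eq_mul_div, one_mul, le_div_iff₀ (by positivity)]
        calc _ = c * (u * (l ^ (max (p - 1) 1) * phiShiftDeriv p κ t)) := by ring
          _ ≤ c * (u * phiShiftDeriv p κ u) := by
              gcongr
              exact (phiShiftDeriv_le_scale p hκ ht hl hl1).trans (phiShiftDeriv_mono hp hκ hlt h)
          _ ≤ _ := hcu
      have h3 : 0 ≤ 2 / l * phiShift p κ u := by positivity
      have h4 : 0 ≤ δ * phiShift p κ t := by positivity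
      rw [add_mul (2 / l), add_mul (1 / (l * c))]
      linarith
end

section
/- Let p ∈ [2,∞). For every κ ≥ 0 and every t ≥ 0 one has the two-sided bound (1/(2p))·(κ+t)^p − ((2^{p−1} − 1)/(p(p−1)))·κ^p ≤ φ_κ(t) ≤ (1/p)·(κ+t)^p + κ^p/(p(p−1)); in particular t^p/p ≤ (κ+t)^p/p and (κ+t)^p is bounded by a constant (depending only on p) times φ_κ(t) + κ^p. -/
/-!
Writing `s = (κ + s) - κ` in the integrand, the potential integrates explicitly (`phiShift_eq`):
with `u = κ + t`,
`φ_κ(t) = u ^ p / p - κ u ^ (p - 1) / (p - 1) + κ ^ p / (p (p - 1))`.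
The upper bound drops the nonpositive middle term. The lower bound is, up to the factor
`1 / (2 (p - 1))`, Young's inequality for the product of `2κ` and `u ^ (p - 1)`
(`young_two_mul`). The last estimate rearranges the lower bound, using `φ_κ(t) ≥ 0`.
-/

open Real MeasureTheory

/-- Closed form of the potential, obtained by writing `s = (κ + s) - κ` in the integrand. -/
lemma phiShift_eq (p : ℝ) (hp : 2 ≤ p) (κ : ℝ) (hκ : 0 ≤ κ) (t : ℝ) (ht : 0 ≤ t) :
    phiShift p κ t =
      (κ + t) ^ p / p - κ * (κ + t) ^ (p - 1) / (p - 1) + κ ^ p / (p * (p - 1)) := by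
  have hp0 : p ≠ 0 := by linarith
  have hp1 : p - 1 ≠ 0 := by linarith
  have hderiv : ∀ s ∈ Set.uIcc 0 t,
      HasDerivAt (fun s : ℝ => (κ + s) ^ p / p - κ * (κ + s) ^ (p - 1) / (p - 1))
        ((κ + s) ^ (p - 2) * s) s := by
    intro s hs
    rw [Set.uIcc_of_le ht] at hs
    have hs0 : 0 ≤ κ + s := add_nonneg hκ hs.1
    have hlin : HasDerivAt (fun s : ℝ => κ + s) 1 s := (hasDerivAt_id s).const_add κ
    have h1 := (hlin.rpow_const (p := p) (Or.inr (by linarith))).div_const p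
    have h2 := ((hlin.rpow_const (p := p - 1) (Or.inr (by linarith))).const_mul κ).div_const
      (p - 1)
    refine (h1.sub h2).congr_deriv ?_
    -- valid also at `κ + s = 0`, since the exponent `p - 1` is nonzero
    have hpow : (κ + s) ^ (p - 1) = (κ + s) ^ (p - 2) * (κ + s) := by
      rw [← Real.rpow_add_one' hs0 (by linarith)]
      congr 1
      ring
    rw [hpow, show p - 1 - 1 = p - 2 by ring]
    field_simp
    ring
  have hcont : Continuous fun s : ℝ => (κ + s) ^ (p - 2) * s :=
    ((continuous_const.add continuous_id).rpow_const fun _ => Or.inr (by linarith)).mul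
      continuous_id
  have hκp : κ ^ p = κ * κ ^ (p - 1) := by
    rw [mul_comm, ← Real.rpow_add_one' hκ (by linarith)]
    congr 1
    ring
  rw [phiShift, intervalIntegral.integral_eq_sub_of_hasDerivAt hderiv
    (hcont.intervalIntegrable 0 t), add_zero, hκp]
  field_simp
  ring

/-- Young's inequality with exponents `p` and `p / (p - 1)`, applied to `2κ` and `u ^ (p - 1)`. -/
lemma young_two_mul (p : ℝ) (hp : 2 ≤ p) (κ u : ℝ) (hκ : 0 ≤ κ) (hu : 0 ≤ u) :
    2 * κ * u ^ (p - 1) ≤ 2 ^ p * κ ^ p / p + (p - 1) * u ^ p / p := by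
  have hpq : p.HolderConjugate (p / (p - 1)) :=
    Real.HolderConjugate.conjExponent (by linarith)
  have h := Real.young_inequality_of_nonneg (mul_nonneg zero_le_two hκ)
    (Real.rpow_nonneg hu (p - 1)) hpq
  have hp1 : p - 1 ≠ 0 := by linarith
  rw [← Real.rpow_mul hu, mul_div_cancel₀ _ hp1, Real.mul_rpow zero_le_two hκ] at h
  refine h.trans_eq ?_
  field_simp

theorem stmt_13 (p : ℝ) (hp : 2 ≤ p) :
    ∃ C : ℝ, 0 < C ∧
      ∀ κ : ℝ, 0 ≤ κ → ∀ t : ℝ, 0 ≤ t →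
        (1 / (2 * p)) * (κ + t) ^ p - (((2:ℝ) ^ (p - 1) - 1) / (p * (p - 1))) * κ ^ p ≤
            phiShift p κ t ∧
        phiShift p κ t ≤ (1 / p) * (κ + t) ^ p + κ ^ p / (p * (p - 1)) ∧
        t ^ p / p ≤ (κ + t) ^ p / p ∧
        (κ + t) ^ p ≤ C * (phiShift p κ t + κ ^ p) := by
  have hp0 : 0 < p := by linarith
  have hp1 : 0 < p - 1 := by linarith
  have hc : 0 ≤ ((2:ℝ) ^ (p - 1) - 1) / (p * (p - 1)) :=
    div_nonneg (sub_nonneg.2 (Real.one_le_rpow one_le_two hp1.le)) (by positivity)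
  refine ⟨2 * p * (1 + ((2:ℝ) ^ (p - 1) - 1) / (p * (p - 1))), by positivity, ?_⟩
  intro κ hκ t ht
  have hu : 0 ≤ κ + t := add_nonneg hκ ht
  have hlow : (1 / (2 * p)) * (κ + t) ^ p - (((2:ℝ) ^ (p - 1) - 1) / (p * (p - 1))) * κ ^ p ≤
      phiShift p κ t := by
    have hy := young_two_mul p hp κ (κ + t) hκ hu
    have h2 : (2:ℝ) ^ p = 2 * 2 ^ (p - 1) := by
      rw [mul_comm, ← Real.rpow_add_one two_ne_zero]
      congr 1
      ring
    rw [h2] at hy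
    rw [phiShift_eq p hp κ hκ t ht, ← sub_nonneg]
    -- the gap is Young's gap divided by `2 (p - 1)`
    have h := div_nonneg (sub_nonneg.2 hy) (by positivity : 0 ≤ 2 * (p - 1))
    refine h.trans_eq ?_
    field_simp
    ring
  have hφ : 0 ≤ phiShift p κ t :=
    intervalIntegral.integral_nonneg ht fun s hs =>
      mul_nonneg (Real.rpow_nonneg (add_nonneg hκ hs.1) _) hs.1
  have hκp : 0 ≤ κ ^ p := Real.rpow_nonneg hκ p
  refine ⟨hlow, ?_, ?_, ?_⟩
  · rw [phiShift_eq p hp κ hκ t ht]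
    have : 0 ≤ κ * (κ + t) ^ (p - 1) / (p - 1) := by positivity
    rw [one_div_mul_eq_div]
    linarith
  · gcongr
    linarith
  · generalize ((2:ℝ) ^ (p - 1) - 1) / (p * (p - 1)) = c at hc hlow ⊢
    have h1 : (κ + t) ^ p = 2 * p * ((1 / (2 * p)) * (κ + t) ^ p) := by field_simp
    calc (κ + t) ^ p = 2 * p * ((1 / (2 * p)) * (κ + t) ^ p) := h1
      _ ≤ 2 * p * ((1 + c) * (phiShift p κ t + κ ^ p)) := by
        refine mul_le_mul_of_nonneg_left ?_ (by positivity)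
        linarith [mul_nonneg hc hφ]
      _ = 2 * p * (1 + c) * (phiShift p κ t + κ ^ p) := by ring
end

section
/- Let p ∈ (1,∞). There exist constants 0 < c ≤ C, depending only on p, such that for every κ ≥ 0 and every t ≥ 0 one has c·φ_κ(t) ≤ (κ+t)^{p−2}·t² ≤ C·φ_κ(t); that is, φ'_κ(t)·t is comparable to φ_κ(t) uniformly in t ≥ 0 and in the shift κ ≥ 0. -/
/-!
Write `g s = (κ + s) ^ (p - 2) * s`, so that `φ_κ` is the primitive of `g` vanishing at `0`, and
`f s = g s * s`. For `s > 0` one has `f' s = g s * (2 + (p - 2) * (s / (κ + s)))`, and since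
`s / (κ + s) ∈ [0, 1]` the last factor lies between `min 2 p` and `max 2 p`. As `f 0 = 0`,
integrating `min 2 p * g ≤ f' ≤ max 2 p * g` over `[0, t]` yields both bounds.
The function `g` is continuous on `[0, t]` even for `κ = 0`, where `g s = s ^ (p - 1)`.
-/

open Real MeasureTheory

lemma continuousOn_shift_deriv {p κ : ℝ} (hp : 1 < p) (hκ : 0 ≤ κ) (t : ℝ) :
    ContinuousOn (fun s : ℝ => (κ + s) ^ (p - 2) * s) (Set.Icc 0 t) := by
  rcases hκ.eq_or_lt with rfl | hκ
  · have h : ContinuousOn (fun s : ℝ => s ^ (p - 1)) (Set.Icc 0 t) :=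
      continuousOn_id.rpow_const fun s _ => Or.inr (by linarith)
    refine h.congr fun s hs => ?_
    rcases hs.1.eq_or_lt with rfl | hs0
    · simp [Real.zero_rpow (show p - 1 ≠ 0 by linarith)]
    · simp only [zero_add]
      rw [show p - 1 = (p - 2) + 1 by ring, Real.rpow_add_one hs0.ne']
  · refine ContinuousOn.mul (ContinuousOn.rpow_const (by fun_prop) fun s hs => Or.inl ?_)
      continuousOn_id
    have := hs.1
    positivity

lemma hasDerivAt_shift_mul {p κ s : ℝ} (hκ : 0 ≤ κ) (hs : 0 < s) :
    HasDerivAt (fun s : ℝ => (κ + s) ^ (p - 2) * s * s)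
      ((κ + s) ^ (p - 2) * s * (2 + (p - 2) * (s / (κ + s)))) s := by
  have hpos : 0 < κ + s := by positivity
  have h1 : HasDerivAt (fun s : ℝ => κ + s) 1 s := (hasDerivAt_id s).const_add κ
  have h2 := h1.rpow_const (p := p - 2) (Or.inl hpos.ne')
  refine ((h2.mul (hasDerivAt_id s)).mul (hasDerivAt_id s)).congr_deriv ?_
  rw [Real.rpow_sub_one hpos.ne']
  simp only [id, Pi.mul_apply]
  field_simp
  ring

lemma factor_bounds {p r : ℝ} (h0 : 0 ≤ r) (h1 : r ≤ 1) :
    min 2 p ≤ 2 + (p - 2) * r ∧ 2 + (p - 2) * r ≤ max 2 p := by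
  rcases le_total 2 p with h | h
  · rw [min_eq_left h, max_eq_right h]
    constructor <;> nlinarith
  · rw [min_eq_right h, max_eq_left h]
    constructor <;> nlinarith

theorem stmt_16 (p : ℝ) (hp : 1 < p) :
    ∃ c C : ℝ, 0 < c ∧ c ≤ C ∧
      ∀ κ : ℝ, 0 ≤ κ → ∀ t : ℝ, 0 ≤ t →
        c * phiShift p κ t ≤ (κ + t) ^ (p - 2) * t ^ 2 ∧
        (κ + t) ^ (p - 2) * t ^ 2 ≤ C * phiShift p κ t := by
  refine ⟨min 2 p, max 2 p, lt_min two_pos (by linarith), min_le_max, fun κ hκ t ht => ?_⟩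
  have hg := continuousOn_shift_deriv hp hκ t
  have hf : ContinuousOn (fun s : ℝ => (κ + s) ^ (p - 2) * s * s) (Set.Icc 0 t) :=
    hg.mul continuousOn_id
  have h_integ (a : ℝ) : IntegrableOn (fun s : ℝ => a * ((κ + s) ^ (p - 2) * s)) (Set.Icc 0 t) :=
    (continuousOn_const.mul hg).integrableOn_Icc
  have hd : ∀ s ∈ Set.Ioo 0 t, HasDerivWithinAt (fun s : ℝ => (κ + s) ^ (p - 2) * s * s)
      ((κ + s) ^ (p - 2) * s * (2 + (p - 2) * (s / (κ + s)))) (Set.Ioi s) s :=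
    fun s hs => (hasDerivAt_shift_mul hκ hs.1).hasDerivWithinAt
  have hb (s : ℝ) (hs : s ∈ Set.Ioo 0 t) : 0 ≤ (κ + s) ^ (p - 2) * s ∧
      min 2 p ≤ 2 + (p - 2) * (s / (κ + s)) ∧ 2 + (p - 2) * (s / (κ + s)) ≤ max 2 p := by
    have hs0 : 0 < s := hs.1
    exact ⟨by positivity, factor_bounds (by positivity) (div_le_one_of_le₀ (by linarith)
      (by positivity))⟩
  have hlo := intervalIntegral.integral_le_sub_of_hasDeriv_right_of_le ht hf hd (h_integ (min 2 p))
    fun s hs => by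
      rw [mul_comm]
      exact mul_le_mul_of_nonneg_left (hb s hs).2.1 (hb s hs).1
  have hhi := intervalIntegral.sub_le_integral_of_hasDeriv_right_of_le ht hf hd (h_integ (max 2 p))
    fun s hs => by
      rw [mul_comm (max 2 p)]
      exact mul_le_mul_of_nonneg_left (hb s hs).2.2 (hb s hs).1
  rw [intervalIntegral.integral_const_mul, mul_zero, sub_zero, mul_assoc, ← sq] at hlo hhi
  exact ⟨hlo, hhi⟩
end
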